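/- Under Assumption 1 or Assumption 2, suppose ℓ ∈ R(L*) + R(H*) and let (ẑ, p̂) with p̂ ∈ D(L) and ẑ in the domain of L* be any solution of the system L*ẑ = ℓ − H*Q2Hp̂, Lp̂ = Q1⁻¹ẑ. Then σ̂(ℓ) = (ℓ, p̂)^{1/2}, and the unique minimax a priori estimation is the linear estimate (û, y) with û = Q2Hp̂ (and ĉ = 0), i.e. σ(ℓ, û, 0) = σ̂(ℓ) and (û, 0) is the unique minimizer of σ(ℓ, ·, ·). -/

import Mathlib

/-!
The bias and the noise contribute separately to the mean-squared error: for zero-mean noise,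
`E(a - (u, η) - c)² = (a - c)² + E(u, η)²` with `a = (ℓ, φ) - (u, Hφ)`. Write `û = Q2 H p̂`,
`A = (Q1 L p̂, L p̂)` and `B = (Q2 H p̂, H p̂)`; pairing the system with `p̂` gives `(ℓ, p̂) = A + B`.

*Upper bound* (`worstErr_le`). For `u = û`, the system gives `a = (ẑ, Lφ)`. Cauchy–Schwarz
in the `Q1`- and `Q2`-inner products bounds the two contributions by `A` and `B`.

*Lower bound* (`le_worstErr`). The noise uniform on `{v, -v}`, with `v` proportional to `Q2⁻¹ u`, has
`E(u, η)² = (Q2⁻¹ u, u)`, and one of the signs `±φ` makes the squared bias at least `a² + c²`.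
Take `φ = t p̂`, `w = u - û` and `s = (w, H p̂)`. The total is then at least
`t² (A - s)² + c² + B + 2 s + (Q2⁻¹ w, w)`, and a suitable `t` (`exists_scale`) makes this at least
`A + B + c² + (Q2⁻¹ w, w)`. This gives both optimality and uniqueness.
-/

/-!
Minimax a priori state estimation (S. Zhuk), **Theorem 1 (representation part)**.
Under Assumption 1 or 2, if `ℓ ∈ R(L*) + R(H*)` and `(zh, ph)` solves
`L* zh = ℓ − H* Q2 H ph`, `L ph = Q1⁻¹ zh`, then `σ̂(ℓ) = (ℓ, ph)^{1/2}` (stated in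
squared form: the minimax squared error equals `(ℓ, ph)`), and the unique
minimax a priori estimation is `(û, y)` with `û = Q2 H ph`, `ĉ = 0`.
-/

open MeasureTheory
open scoped ENNReal RealInnerProductSpace

/-- A noise distribution is admissible if it is a zero-mean probability measure
with `E (Q2 η, η) ≤ 1`. -/
def AdmissibleNoise {𝓨 : Type*} [NormedAddCommGroup 𝓨] [InnerProductSpace ℝ 𝓨]
    [MeasurableSpace 𝓨] (Q2 : 𝓨 →L[ℝ] 𝓨) (μ : Measure 𝓨) : Prop :=
  IsProbabilityMeasure μ ∧ Integrable id μ ∧ (∫ η, η ∂μ) = 0 ∧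
    (∫⁻ η, ENNReal.ofReal ⟪Q2 η, η⟫ ∂μ) ≤ 1

/-- The worst-case mean-squared error `σ(ℓ, u, c)` of the affine estimate
`(u, y) + c` of `(ℓ, φ)` from the observation `y = H φ + η`. -/
noncomputable def worstErr {𝓗 𝓕 𝓨 : Type*}
    [NormedAddCommGroup 𝓗] [InnerProductSpace ℝ 𝓗]
    [NormedAddCommGroup 𝓕] [InnerProductSpace ℝ 𝓕]
    [NormedAddCommGroup 𝓨] [InnerProductSpace ℝ 𝓨] [MeasurableSpace 𝓨]
    (L : 𝓗 →ₗ.[ℝ] 𝓕) (H : 𝓗 →L[ℝ] 𝓨) (Q1 : 𝓕 →L[ℝ] 𝓕) (Q2 : 𝓨 →L[ℝ] 𝓨)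
    (ℓ : 𝓗) (u : 𝓨) (c : ℝ) : ℝ≥0∞ :=
  ⨆ (φ : L.domain) (_ : ⟪Q1 (L φ), L φ⟫ ≤ 1) (μ : Measure 𝓨)
      (_ : AdmissibleNoise Q2 μ),
    ∫⁻ η, ENNReal.ofReal ((⟪ℓ, (φ : 𝓗)⟫ - ⟪u, H φ + η⟫ - c) ^ 2) ∂μ

/-- The squared minimax a priori error `σ̂(ℓ)² = inf_{u,c} σ(ℓ, u, c)`. -/
noncomputable def minimaxErr {𝓗 𝓕 𝓨 : Type*}
    [NormedAddCommGroup 𝓗] [InnerProductSpace ℝ 𝓗]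
    [NormedAddCommGroup 𝓕] [InnerProductSpace ℝ 𝓕]
    [NormedAddCommGroup 𝓨] [InnerProductSpace ℝ 𝓨] [MeasurableSpace 𝓨]
    (L : 𝓗 →ₗ.[ℝ] 𝓕) (H : 𝓗 →L[ℝ] 𝓨) (Q1 : 𝓕 →L[ℝ] 𝓕) (Q2 : 𝓨 →L[ℝ] 𝓨)
    (ℓ : 𝓗) : ℝ≥0∞ :=
  ⨅ (u : 𝓨) (c : ℝ), worstErr L H Q1 Q2 ℓ u c

/-- Cauchy–Schwarz in the inner product induced by `Q`, in dual form. -/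
lemma inner_sq_le_of_pos {E : Type*} [NormedAddCommGroup E] [InnerProductSpace ℝ E]
    [CompleteSpace E] (Q : E ≃L[ℝ] E) (hsa : IsSelfAdjoint (Q : E →L[ℝ] E))
    (hpos : ∀ f : E, f ≠ 0 → 0 < ⟪Q f, f⟫) (z f : E) :
    ⟪z, f⟫ ^ 2 ≤ ⟪Q.symm z, z⟫ * ⟪Q f, f⟫ := by
  have hsym : ∀ x y : E, ⟪Q x, y⟫ = ⟪x, Q y⟫ := fun x y => by
    simpa using hsa.isSymmetric x y
  have hnn : ∀ x : E, 0 ≤ ⟪Q x, x⟫ := fun x => by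
    by_cases hx : x = 0
    · simp [hx]
    · exact (hpos x hx).le
  have h1 : ⟪Q f, Q.symm z⟫ = ⟪z, f⟫ := by
    rw [hsym, Q.apply_symm_apply, real_inner_comm]
  have key : ∀ t : ℝ, 0 ≤ ⟪Q f, f⟫ * (t * t) + (-2 * ⟪z, f⟫) * t + ⟪Q.symm z, z⟫ := fun t => by
    have h := hnn (t • f - Q.symm z)
    simp only [map_sub, map_smul, Q.apply_symm_apply, inner_sub_left, inner_sub_right,
      real_inner_smul_left, real_inner_smul_right, h1] at h
    rw [real_inner_comm z (Q.symm z)]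
    linarith
  have := discrim_le_zero key
  unfold discrim at this
  nlinarith

lemma inner_symm_nonneg {E : Type*} [NormedAddCommGroup E] [InnerProductSpace ℝ E]
    (Q : E ≃L[ℝ] E) (hpos : ∀ f : E, f ≠ 0 → 0 < ⟪Q f, f⟫) (z : E) :
    0 ≤ ⟪Q.symm z, z⟫ := by
  by_cases hx : Q.symm z = 0
  · simp [hx]
  · have := hpos _ hx
    rw [Q.apply_symm_apply, real_inner_comm] at this
    exact this.le

/-- The scaling of `p̂` used in the lower bound. For `A > 0` it is normalised to `t² A = 1`;
for `A = 0` every `t` is allowed, and a large enough one compensates a negative `s`. -/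
lemma exists_scale (A s : ℝ) (hA : 0 ≤ A) :
    ∃ t : ℝ, t ^ 2 * A ≤ 1 ∧ A ≤ t ^ 2 * (A - s) ^ 2 + 2 * s := by
  rcases hA.eq_or_lt with rfl | hA
  · refine ⟨√(2 / |s|), by simp, ?_⟩
    rw [Real.sq_sqrt (by positivity)]
    rcases eq_or_ne s 0 with rfl | hs
    · simp
    · have h : 2 / |s| * (0 - s) ^ 2 = 2 * |s| := by
        rw [zero_sub, neg_sq, ← sq_abs s]
        have := abs_pos.2 hs
        field_simp
      rw [h]
      linarith [neg_abs_le s]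
  · refine ⟨√(1 / A), ?_, ?_⟩
    · rw [Real.sq_sqrt (by positivity)]
      field_simp
      rfl
    · rw [Real.sq_sqrt (by positivity)]
      have h : 1 / A * (A - s) ^ 2 + 2 * s = A + s ^ 2 / A := by
        field_simp
        ring
      rw [h]
      have : 0 ≤ s ^ 2 / A := by positivity
      linarith

/-- The uniform distribution on the pair `{v, -v}`. -/
noncomputable def twoPoint {E : Type*} [NormedAddCommGroup E] [MeasurableSpace E] (v : E) :
    Measure E :=
  (2⁻¹ : ℝ≥0∞) • (Measure.dirac v + Measure.dirac (-v))

lemma lintegral_twoPoint {E : Type*} [NormedAddCommGroup E] [MeasurableSpace E] [BorelSpace E]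
    (v : E) (f : E → ℝ) (hf : ∀ x, 0 ≤ f x) :
    ∫⁻ η, ENNReal.ofReal (f η) ∂(twoPoint v) = ENNReal.ofReal ((f v + f (-v)) / 2) := by
  rw [twoPoint, lintegral_smul_measure, lintegral_add_measure, lintegral_dirac, lintegral_dirac,
    ← ENNReal.ofReal_add (hf _) (hf _), div_eq_inv_mul, ENNReal.ofReal_mul (by norm_num),
    ENNReal.ofReal_inv_of_pos (by norm_num)]
  simp

lemma admissible_twoPoint {E : Type*} [NormedAddCommGroup E] [InnerProductSpace ℝ E]
    [CompleteSpace E] [MeasurableSpace E] [BorelSpace E]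
    (Q : E →L[ℝ] E) (hnn : ∀ x, 0 ≤ ⟪Q x, x⟫) (v : E) (hv : ⟪Q v, v⟫ ≤ 1) :
    AdmissibleNoise Q (twoPoint v) := by
  have hi : ∀ x : E, Integrable (fun η : E => η) (Measure.dirac x) := fun x =>
    integrable_dirac (by simp)
  refine ⟨⟨?_⟩, ?_, ?_, ?_⟩
  · simp [twoPoint, ENNReal.inv_two_add_inv_two]
  · exact ((hi v).add_measure (hi (-v))).smul_measure (by simp)
  · rw [twoPoint, integral_smul_measure, integral_add_measure (hi _) (hi _)]
    simp
  · rw [lintegral_twoPoint v (fun η => ⟪Q η, η⟫) hnn]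
    simpa using hv

section

variable {𝓗 𝓕 𝓨 : Type*}
    [NormedAddCommGroup 𝓗] [InnerProductSpace ℝ 𝓗]
    [NormedAddCommGroup 𝓕] [InnerProductSpace ℝ 𝓕]
    [NormedAddCommGroup 𝓨] [InnerProductSpace ℝ 𝓨] [CompleteSpace 𝓨]
    [MeasurableSpace 𝓨]
    (L : 𝓗 →ₗ.[ℝ] 𝓕) (H : 𝓗 →L[ℝ] 𝓨) (Q1 : 𝓕 →L[ℝ] 𝓕) (Q2 : 𝓨 ≃L[ℝ] 𝓨)

/-- Every admissible signal `φ` bounds the worst-case error from below: the sign of `φ` is adapted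
to `c`, and the noise is the two-point distribution in the direction `Q2⁻¹ u`. -/
lemma le_worstErr [BorelSpace 𝓨] (hQ2pos : ∀ y : 𝓨, y ≠ 0 → 0 < ⟪Q2 y, y⟫) (ℓ : 𝓗) (u : 𝓨) (c : ℝ)
    (φ : L.domain) (hφ : ⟪Q1 (L φ), L φ⟫ ≤ 1) :
    ENNReal.ofReal ((⟪ℓ, (φ : 𝓗)⟫ - ⟪u, H φ⟫) ^ 2 + c ^ 2 + ⟪Q2.symm u, u⟫)
      ≤ worstErr L H Q1 (Q2 : 𝓨 →L[ℝ] 𝓨) ℓ u c := by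
  wlog hac : (⟪ℓ, (φ : 𝓗)⟫ - ⟪u, H φ⟫) * c ≤ 0 generalizing φ
  · have h := this (-φ) (by simpa [LinearPMap.map_neg] using hφ)
      (by
        simp only [NegMemClass.coe_neg, map_neg, inner_neg_right]
        linarith)
    simp only [NegMemClass.coe_neg, map_neg, inner_neg_right] at h
    convert h using 3
    ring
  set D := ⟪Q2.symm u, u⟫ with hD
  have hD0 : 0 ≤ D := inner_symm_nonneg Q2 hQ2pos u
  have hnn : ∀ x : 𝓨, 0 ≤ ⟪(Q2 : 𝓨 →L[ℝ] 𝓨) x, x⟫ := fun x => by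
    by_cases hx : x = 0
    · simp [hx]
    · exact (hQ2pos x hx).le
  -- If `D = 0`, the junk value `(√0)⁻¹ = 0` gives `v = 0`, as needed.
  set v : 𝓨 := (√D)⁻¹ • Q2.symm u with hv
  have huv : ⟪u, v⟫ ^ 2 = D := by
    rw [hv, real_inner_smul_right, real_inner_comm, ← hD, mul_pow, inv_pow, Real.sq_sqrt hD0]
    rcases eq_or_ne D 0 with h | h
    · simp [h]
    · field_simp
  have hvv : ⟪(Q2 : 𝓨 →L[ℝ] 𝓨) v, v⟫ ≤ 1 := by
    have h : ⟪(Q2 : 𝓨 →L[ℝ] 𝓨) v, v⟫ = (√D)⁻¹ ^ 2 * D := by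
      rw [hv, map_smul, real_inner_smul_left, real_inner_smul_right, hD,
        ContinuousLinearEquiv.coe_coe, Q2.apply_symm_apply, real_inner_comm]
      ring
    rw [h, inv_pow, Real.sq_sqrt hD0]
    exact inv_mul_le_one
  refine le_trans ?_ (le_iSup₂_of_le φ hφ
    (le_iSup₂_of_le (twoPoint v) (admissible_twoPoint _ hnn v hvv) le_rfl))
  rw [lintegral_twoPoint v _ (fun _ => sq_nonneg _)]
  apply ENNReal.ofReal_le_ofReal
  simp only [inner_add_right, inner_neg_right]
  rw [← huv]
  nlinarith

/-- The squared bias and the noise variance add up because the noise has mean zero, and the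
variance is at most `(Q2⁻¹ u, u)` by Cauchy–Schwarz. -/
lemma worstErr_le (hQ2sa : IsSelfAdjoint (Q2 : 𝓨 →L[ℝ] 𝓨))
    (hQ2pos : ∀ y : 𝓨, y ≠ 0 → 0 < ⟪Q2 y, y⟫) (ℓ : 𝓗) (u : 𝓨) (a : ℝ)
    (ha : ∀ φ : L.domain, ⟪Q1 (L φ), L φ⟫ ≤ 1 → (⟪ℓ, (φ : 𝓗)⟫ - ⟪u, H φ⟫) ^ 2 ≤ a) :
    worstErr L H Q1 (Q2 : 𝓨 →L[ℝ] 𝓨) ℓ u 0 ≤ ENNReal.ofReal (a + ⟪Q2.symm u, u⟫) := by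
  refine iSup₂_le fun φ hφ => iSup₂_le fun μ hμ => ?_
  obtain ⟨hprob, hint, hmean, hvar⟩ := hμ
  set D := ⟪Q2.symm u, u⟫ with hD
  have hD0 : 0 ≤ D := inner_symm_nonneg Q2 hQ2pos u
  have hint1 : Integrable (fun η : 𝓨 => ⟪u, η⟫) μ := hint.const_inner u
  have hmean1 : ∫ η, ⟪u, η⟫ ∂μ = 0 := by
    have h := integral_inner (𝕜 := ℝ) hint u
    simp only [id] at h
    rw [h, hmean, inner_zero_right]
  have hbd : ∫⁻ η, ENNReal.ofReal (⟪u, η⟫ ^ 2) ∂μ ≤ ENNReal.ofReal D := by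
    calc ∫⁻ η, ENNReal.ofReal (⟪u, η⟫ ^ 2) ∂μ
        ≤ ∫⁻ η, ENNReal.ofReal D * ENNReal.ofReal ⟪(Q2 : 𝓨 →L[ℝ] 𝓨) η, η⟫ ∂μ := by
          refine lintegral_mono fun η => ?_
          rw [← ENNReal.ofReal_mul hD0]
          exact ENNReal.ofReal_le_ofReal (inner_sq_le_of_pos Q2 hQ2sa hQ2pos u η)
      _ = ENNReal.ofReal D * ∫⁻ η, ENNReal.ofReal ⟪(Q2 : 𝓨 →L[ℝ] 𝓨) η, η⟫ ∂μ :=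
          lintegral_const_mul' _ _ ENNReal.ofReal_ne_top
      _ ≤ ENNReal.ofReal D := mul_le_of_le_one_right' hvar
  have hint2 : Integrable (fun η : 𝓨 => ⟪u, η⟫ ^ 2) μ := by
    refine ⟨hint1.aestronglyMeasurable.pow 2, ?_⟩
    rw [hasFiniteIntegral_iff_ofReal (Filter.Eventually.of_forall fun _ => sq_nonneg _)]
    exact hbd.trans_lt ENNReal.ofReal_lt_top
  have hI2 : ∫ η, ⟪u, η⟫ ^ 2 ∂μ ≤ D := by
    rw [← ofReal_integral_eq_lintegral_ofReal hint2
      (Filter.Eventually.of_forall fun _ => sq_nonneg _)] at hbd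
    exact (ENNReal.ofReal_le_ofReal_iff hD0).1 hbd
  set x := ⟪ℓ, (φ : 𝓗)⟫ - ⟪u, H φ⟫ with hx
  have hexp : (fun η : 𝓨 => (⟪ℓ, (φ : 𝓗)⟫ - ⟪u, H φ + η⟫ - 0) ^ 2)
      = fun η => x ^ 2 - 2 * x * ⟪u, η⟫ + ⟪u, η⟫ ^ 2 := by
    funext η
    rw [inner_add_right, hx]
    ring
  have hintc : Integrable (fun η : 𝓨 => x ^ 2 - 2 * x * ⟪u, η⟫) μ :=
    (integrable_const _).sub (hint1.const_mul _)
  rw [← ofReal_integral_eq_lintegral_ofReal (by rw [hexp]; exact hintc.add hint2)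
      (Filter.Eventually.of_forall fun _ => sq_nonneg _), hexp, integral_add hintc hint2,
    integral_sub (integrable_const _) (hint1.const_mul _), integral_const_mul, hmean1]
  apply ENNReal.ofReal_le_ofReal
  have := ha φ hφ
  simp only [integral_const, probReal_univ, one_smul, mul_zero, sub_zero]
  linarith

end

/-- **Theorem 1 (minimax a priori estimation).** -/
theorem minimax_apriori_estimation {𝓗 𝓕 𝓨 : Type*}
    [NormedAddCommGroup 𝓗] [InnerProductSpace ℝ 𝓗] [CompleteSpace 𝓗]
    [NormedAddCommGroup 𝓕] [InnerProductSpace ℝ 𝓕] [CompleteSpace 𝓕]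
    [NormedAddCommGroup 𝓨] [InnerProductSpace ℝ 𝓨] [CompleteSpace 𝓨]
    [MeasurableSpace 𝓨] [BorelSpace 𝓨]
    -- `L` closed densely defined
    (L : 𝓗 →ₗ.[ℝ] 𝓕) (hLdense : Dense (L.domain : Set 𝓗))
    (hLclosed : IsClosed (L.graph : Set (𝓗 × 𝓕)))
    (H : 𝓗 →L[ℝ] 𝓨)
    -- `Q1`, `Q2` bounded self-adjoint positive definite with bounded inverses
    (Q1 : 𝓕 ≃L[ℝ] 𝓕) (Q2 : 𝓨 ≃L[ℝ] 𝓨)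
    (hQ1sa : IsSelfAdjoint (Q1 : 𝓕 →L[ℝ] 𝓕))
    (hQ2sa : IsSelfAdjoint (Q2 : 𝓨 →L[ℝ] 𝓨))
    (hQ1pos : ∀ f : 𝓕, f ≠ 0 → 0 < ⟪Q1 f, f⟫)
    (hQ2pos : ∀ y : 𝓨, y ≠ 0 → 0 < ⟪Q2 y, y⟫)
    -- Assumption 1 or Assumption 2
    (hassumption :
      (IsClosed {f : 𝓕 | ∃ x : L.domain, L x = f} ∧
        IsClosed (H '' {x : 𝓗 | ∃ hx : x ∈ L.domain, L ⟨x, hx⟩ = 0})) ∨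
      IsClosed {p : 𝓕 × 𝓨 | ∃ x : L.domain, p = (L x, H (x : 𝓗))})
    (ℓ : 𝓗)
    -- `ℓ ∈ R(L*) + R(H*)`
    (hℓ : ∃ z : L.adjoint.domain, ∃ u : 𝓨,
        ℓ = L.adjoint z + (ContinuousLinearMap.adjoint H) u)
    -- `(zh, ph)` is any solution of `L* zh = ℓ − H* Q2 H ph`, `L ph = Q1⁻¹ zh`
    (zh : L.adjoint.domain) (ph : L.domain)
    (hsys₁ : L.adjoint zh =
      ℓ - (ContinuousLinearMap.adjoint H) ((Q2 : 𝓨 →L[ℝ] 𝓨) (H (ph : 𝓗))))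
    (hsys₂ : L ph = Q1.symm (zh : 𝓕)) :
    -- `σ̂(ℓ) = (ℓ, ph)^{1/2}`, i.e. the squared minimax error is `(ℓ, ph)`
    minimaxErr L H (Q1 : 𝓕 →L[ℝ] 𝓕) (Q2 : 𝓨 →L[ℝ] 𝓨) ℓ
        = ENNReal.ofReal ⟪ℓ, (ph : 𝓗)⟫ ∧
    -- `(û, 0)` with `û = Q2 H ph` attains the minimax error ...
    worstErr L H (Q1 : 𝓕 →L[ℝ] 𝓕) (Q2 : 𝓨 →L[ℝ] 𝓨) ℓ
        ((Q2 : 𝓨 →L[ℝ] 𝓨) (H (ph : 𝓗))) 0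
      = minimaxErr L H (Q1 : 𝓕 →L[ℝ] 𝓕) (Q2 : 𝓨 →L[ℝ] 𝓨) ℓ ∧
    -- ... and is the unique minimizer of `σ(ℓ, ·, ·)`
    (∀ (u : 𝓨) (c : ℝ),
      worstErr L H (Q1 : 𝓕 →L[ℝ] 𝓕) (Q2 : 𝓨 →L[ℝ] 𝓨) ℓ u c
          = minimaxErr L H (Q1 : 𝓕 →L[ℝ] 𝓕) (Q2 : 𝓨 →L[ℝ] 𝓨) ℓ →
        u = (Q2 : 𝓨 →L[ℝ] 𝓨) (H (ph : 𝓗)) ∧ c = 0) := by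
  have hadj : ∀ φ : L.domain, ⟪ℓ, (φ : 𝓗)⟫ - ⟪Q2 (H ph), H φ⟫ = ⟪(zh : 𝓕), L φ⟫ := fun φ => by
    rw [← LinearPMap.adjoint_isFormalAdjoint hLdense zh φ, hsys₁, inner_sub_left,
      ContinuousLinearMap.adjoint_inner_left]
    rfl
  set uh : 𝓨 := (Q2 : 𝓨 →L[ℝ] 𝓨) (H (ph : 𝓗)) with huh
  have hsuh : Q2.symm uh = H ph := Q2.symm_apply_apply _
  have hQL : Q1 (L ph) = zh := by rw [hsys₂, Q1.apply_symm_apply]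
  set A : ℝ := ⟪(zh : 𝓕), L ph⟫ with hAdef
  have hA0 : 0 ≤ A := by
    have := inner_symm_nonneg Q1 hQ1pos (zh : 𝓕)
    rwa [← hsys₂, real_inner_comm] at this
  have hℓp : ⟪ℓ, (ph : 𝓗)⟫ = A + ⟪uh, H ph⟫ := by
    have h := hadj ph
    rw [hAdef, ← h]
    simp [huh]
  have hupper : worstErr L H (Q1 : 𝓕 →L[ℝ] 𝓕) (Q2 : 𝓨 →L[ℝ] 𝓨) ℓ uh 0
      ≤ ENNReal.ofReal ⟪ℓ, (ph : 𝓗)⟫ := by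
    have h := worstErr_le L H (Q1 : 𝓕 →L[ℝ] 𝓕) Q2 hQ2sa hQ2pos ℓ uh A (fun φ hφ => by
      have h1 := inner_sq_le_of_pos Q1 hQ1sa hQ1pos (zh : 𝓕) (L φ)
      rw [← hsys₂, real_inner_comm (zh : 𝓕) (L ph), ← hAdef] at h1
      have h2 : ⟪ℓ, (φ : 𝓗)⟫ - ⟪uh, H φ⟫ = ⟪(zh : 𝓕), L φ⟫ := hadj φ
      rw [h2]
      exact h1.trans (mul_le_of_le_one_right hA0 hφ))
    rwa [hsuh, real_inner_comm, ← hℓp] at h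
  have hlower : ∀ (u : 𝓨) (c : ℝ),
      ENNReal.ofReal (⟪ℓ, (ph : 𝓗)⟫ + c ^ 2 + ⟪Q2.symm (u - uh), u - uh⟫)
        ≤ worstErr L H (Q1 : 𝓕 →L[ℝ] 𝓕) (Q2 : 𝓨 →L[ℝ] 𝓨) ℓ u c := fun u c => by
    obtain ⟨t, ht1, ht2⟩ := exists_scale A ⟪u - uh, H ph⟫ hA0
    refine le_trans (ENNReal.ofReal_le_ofReal ?_)
      (le_worstErr L H (Q1 : 𝓕 →L[ℝ] 𝓕) Q2 hQ2pos ℓ u c (t • ph) ?_)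
    · have hcross : ⟪Q2.symm u, uh⟫ = ⟪u, H ph⟫ := by
        have h := hQ2sa.isSymmetric (Q2.symm u) (H ph)
        simp only [ContinuousLinearMap.coe_coe, ContinuousLinearEquiv.coe_coe,
          Q2.apply_symm_apply] at h
        exact h.symm
      have hquad : ⟪Q2.symm (u - uh), u - uh⟫
          = ⟪Q2.symm u, u⟫ - 2 * ⟪u, H ph⟫ + ⟪uh, H ph⟫ := by
        rw [map_sub, hsuh, inner_sub_left, inner_sub_right, inner_sub_right, hcross,
          real_inner_comm u (H ph), real_inner_comm uh (H ph)]
        ring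
      rw [inner_sub_left] at ht2
      rw [hquad, hℓp]
      have hbias : ⟪ℓ, ((t • ph : L.domain) : 𝓗)⟫ - ⟪u, H ((t • ph : L.domain) : 𝓗)⟫
          = t * (A - (⟪u, H ph⟫ - ⟪uh, H ph⟫)) := by
        rw [Submodule.coe_smul, map_smul, real_inner_smul_right, real_inner_smul_right, hℓp]
        ring
      rw [hbias]
      nlinarith
    · rw [LinearPMap.map_smul, map_smul, real_inner_smul_left, real_inner_smul_right,
        ContinuousLinearEquiv.coe_coe, hQL, ← hAdef]
      linarith
  have hmin : minimaxErr L H (Q1 : 𝓕 →L[ℝ] 𝓕) (Q2 : 𝓨 →L[ℝ] 𝓨) ℓ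
      = ENNReal.ofReal ⟪ℓ, (ph : 𝓗)⟫ := by
    refine le_antisymm ((iInf₂_le uh 0).trans hupper) (le_iInf₂ fun u c => ?_)
    refine (ENNReal.ofReal_le_ofReal ?_).trans (hlower u c)
    have := inner_symm_nonneg Q2 hQ2pos (u - uh)
    nlinarith [sq_nonneg c]
  refine ⟨hmin, le_antisymm (hupper.trans hmin.ge) (iInf₂_le uh 0), fun u c huc => ?_⟩
  have h := hlower u c
  have hB : 0 ≤ ⟪uh, H ph⟫ := by
    have := inner_symm_nonneg Q2 hQ2pos uh
    rwa [hsuh, real_inner_comm] at this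
  rw [huc, hmin, ENNReal.ofReal_le_ofReal_iff (by rw [hℓp]; positivity)] at h
  have hw := inner_symm_nonneg Q2 hQ2pos (u - uh)
  refine ⟨?_, by nlinarith [sq_nonneg c]⟩
  by_contra hne
  have hne' : Q2.symm (u - uh) ≠ 0 := by
    simpa [sub_eq_zero] using hne
  have hp := hQ2pos _ hne'
  rw [Q2.apply_symm_apply, real_inner_comm] at hp
  nlinarith [sq_nonneg c]
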